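/- Let 0 ≤ s < t ≤ T, let m, n ≥ 1 be integers and k ∈ {1, …, m}, and let g₁, …, g_n : [0,T] → ℝ and f₁, …, f_m : [0,T] → ℝ be bounded Borel measurable functions. Then ∫_{Λ^m_{s,t}} ( ∫_{Λ^n_{s,u_k}} ∏_{j=1}^n g_j(v_j) dv₁ ⋯ dv_n ) ∏_{i=1}^m f_i(u_i) du₁ ⋯ du_m = Σ_{σ ∈ S_k(m,n)} ∫_{Λ^{m+n}_{s,t}} ∏_{i=1}^{m+n} h_i(w_{σ(i)}) dw₁ ⋯ dw_{m+n}, where (h₁, …, h_{m+n}) := (g₁, …, g_n, f₁, …, f_m). -/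

import Mathlib

open MeasureTheory

/-- The open simplex `Λ^m_{s,t} = {u ∈ ℝ^m : s < u₁ < ⋯ < u_m < t}`. -/
def simplexSet (m : ℕ) (s t : ℝ) : Set (Fin m → ℝ) :=
  {u | StrictMono u ∧ ∀ i, u i ∈ Set.Ioo s t}

/-!
The orderings `{x | x ∘ σ⁻¹ is strictly increasing}`, over all permutations `σ`, split `ℝ^{n+m}`
up to a null set, since two coordinates agree only on a null set. Hence the integral of any `F` is
the sum over `σ` of the integrals of `w ↦ F (w ∘ σ)` over the increasing `w`. The left-hand side of
the formula is such an integral, over the pairs `(v, u)` of points of the simplices with `v` below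
`u_k`. For increasing `w`, the point `w ∘ σ` is such a pair exactly when `w` is in the simplex, `σ`
is a shuffle, and `σ` sends every `v`-index below the `k`-th `u`-index; the last condition says that
the entries from the `k`-th `u`-variable on already are where they belong.
-/

section Permutations

lemma perm_apply_eq_self_of_lt_iff_lt {α : Type*} [LinearOrder α] [LocallyFiniteOrderBot α]
    (σ : Equiv.Perm α) (a : α) (h : ∀ i, σ i < σ a ↔ i < a) : σ a = a := by
  have image_Iio : (Finset.Iio a).map σ.toEmbedding = Finset.Iio (σ a) := by
    ext y
    simp only [Finset.mem_map_equiv, Finset.mem_Iio, ← h, Equiv.apply_symm_apply]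
  have card_Iio : (Finset.Iio (σ a)).card = (Finset.Iio a).card := by
    rw [← image_Iio, Finset.card_map]
  rcases lt_trichotomy (σ a) a with hlt | heq | hgt
  · exact absurd card_Iio (Finset.card_lt_card (Finset.Iio_ssubset_Iio hlt)).ne
  · exact heq
  · exact absurd card_Iio (Finset.card_lt_card (Finset.Iio_ssubset_Iio hgt)).ne'

lemma strictMono_comp_iff_eq_sort {α : Type*} [LinearOrder α] {N : ℕ} {x : Fin N → α}
    (hx : Function.Injective x) (σ : Equiv.Perm (Fin N)) :
    StrictMono (x ∘ σ) ↔ σ = Tuple.sort x := by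
  rw [Tuple.eq_sort_iff]
  refine ⟨fun h => ⟨h.monotone, fun i j hij hxij => absurd hxij (h hij).ne⟩, fun h => ?_⟩
  exact h.1.strictMono_of_injective (hx.comp σ.injective)

variable {n m : ℕ} {k : Fin m} {σ : Equiv.Perm (Fin (n + m))}

/-- The set `S_k(m,n)`: shuffles of `n` indices (the `v`-variables, listed first) with `m` indices
(the `u`-variables) that fix the `u`-indices from the `k`-th one on. -/
def IsShuffleBelow (k : Fin m) (σ : Equiv.Perm (Fin (n + m))) : Prop :=
  (StrictMono fun i : Fin n => σ (Fin.castAdd m i)) ∧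
    (StrictMono fun j : Fin m => σ (Fin.natAdd n j)) ∧
    (∀ j : Fin m, k ≤ j → σ (Fin.natAdd n j) = Fin.natAdd n j)

lemma castAdd_lt_natAdd (i : Fin n) (j : Fin m) : Fin.castAdd m i < Fin.natAdd n j := by
  rw [Fin.lt_def, Fin.val_castAdd, Fin.val_natAdd]
  omega

lemma apply_natAdd_eq_self_of_apply_castAdd_lt
    (hu : StrictMono fun j : Fin m => σ (Fin.natAdd n j))
    (hk : ∀ i : Fin n, σ (Fin.castAdd m i) < σ (Fin.natAdd n k)) {j : Fin m} (hj : k ≤ j) :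
    σ (Fin.natAdd n j) = Fin.natAdd n j := by
  refine perm_apply_eq_self_of_lt_iff_lt σ _ (Fin.addCases (fun i => ?_) fun i => ?_)
  · exact iff_of_true ((hk i).trans_le (hu.monotone hj)) (castAdd_lt_natAdd i j)
  · rw [hu.lt_iff_lt (a := i) (b := j), Fin.natAdd_lt_natAdd_iff]

lemma apply_castAdd_lt_apply_natAdd_of_fixed
    (hfix : ∀ j : Fin m, k ≤ j → σ (Fin.natAdd n j) = Fin.natAdd n j) (i : Fin n) :
    σ (Fin.castAdd m i) < σ (Fin.natAdd n k) := by
  by_contra! hle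
  rw [hfix k le_rfl] at hle
  obtain ⟨j, hkj, hj⟩ : ∃ j, k ≤ j ∧ Fin.natAdd n j = σ (Fin.castAdd m i) := by
    generalize σ (Fin.castAdd m i) = q at hle ⊢
    cases q using Fin.addCases with
    | left p => exact absurd hle (castAdd_lt_natAdd p k).not_ge
    | right j => exact ⟨j, (Fin.natAdd_le_natAdd_iff n).1 hle, rfl⟩
  exact (castAdd_lt_natAdd i j).ne' (σ.injective ((hfix j hkj).trans hj))

lemma isShuffleBelow_iff :
    IsShuffleBelow k σ ↔
      (StrictMono fun i : Fin n => σ (Fin.castAdd m i)) ∧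
        (StrictMono fun j : Fin m => σ (Fin.natAdd n j)) ∧
        ∀ i : Fin n, σ (Fin.castAdd m i) < σ (Fin.natAdd n k) :=
  and_congr_right fun _ => and_congr_right fun hu =>
    ⟨apply_castAdd_lt_apply_natAdd_of_fixed,
      fun hk _ => apply_natAdd_eq_self_of_apply_castAdd_lt hu hk⟩

end Permutations

section Ordering

variable {α : Type*} [MeasurableSpace α]

lemma ae_injective_pi {ι : Type*} [Fintype ι] [MeasurableEq α] (μ : ι → Measure α)
    [∀ i, SigmaFinite (μ i)] [∀ i, NullSingletonClass (μ i)] :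
    ∀ᵐ x ∂Measure.pi μ, Function.Injective x := by
  classical
  have ae_ne (i j : ι) (hij : i ≠ j) : ∀ᵐ x ∂Measure.pi μ, x i ≠ x j := by
    have hsplit := measurePreserving_piEquivPiSubtypeProd μ (· = j)
    have hmeas : MeasurableSet {y : (({l // l = j} → α) × ({l // l ≠ j} → α)) |
        y.2 ⟨i, hij⟩ ≠ y.1 ⟨j, rfl⟩} :=
      (measurableSet_eq_fun (by fun_prop) (by fun_prop)).compl
    exact hsplit.quasiMeasurePreserving.ae <| (Measure.ae_prod_iff_ae_ae hmeas).2 <|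
      .of_forall fun y => Measure.ae_eval_ne (fun l : {l // l ≠ j} => μ l) ⟨i, hij⟩ (y ⟨j, rfl⟩)
  have ae_forall_ne : ∀ᵐ x ∂Measure.pi μ, ∀ i j, i ≠ j → x i ≠ x j := by
    simpa only [ae_all_iff, Filter.eventually_imp_distrib_left] using ae_ne
  filter_upwards [ae_forall_ne] with x hx i j
  exact not_imp_not.1 (hx i j)

lemma setIntegral_comp_perm {ι E : Type*} [Fintype ι] [NormedAddCommGroup E] [NormedSpace ℝ E]
    (μ : Measure α) [SigmaFinite μ] (σ : Equiv.Perm ι) (F : (ι → α) → E) (A : Set (ι → α)) :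
    ∫ w in {w | w ∘ σ ∈ A}, F (w ∘ σ) ∂(Measure.pi fun _ => μ) =
      ∫ x in A, F x ∂(Measure.pi fun _ => μ) :=
  (measurePreserving_arrowCongr' (fun _ => μ) (fun _ => μ) σ.symm (MeasurableEquiv.refl α)
    fun _ => MeasurePreserving.id μ).setIntegral_preimage_emb
      (MeasurableEquiv.measurableEmbedding _) F A

variable [LinearOrder α] [TopologicalSpace α] [OrderClosedTopology α] [SecondCountableTopology α]
  [OpensMeasurableSpace α]

lemma measurableSet_setOf_strictMono_comp {ι κ : Type*} [Preorder κ] [Countable κ] (r : κ → ι) :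
    MeasurableSet {x : ι → α | StrictMono (x ∘ r)} := by
  unfold StrictMono
  measurability

lemma integral_eq_sum_perm_setIntegral_strictMono {E : Type*} [NormedAddCommGroup E]
    [NormedSpace ℝ E] {N : ℕ} {μ : Measure α} [SigmaFinite μ] [NullSingletonClass μ]
    {F : (Fin N → α) → E} (hF : Integrable F (Measure.pi fun _ => μ)) :
    ∫ x, F x ∂(Measure.pi fun _ => μ) =
      ∑ σ : Equiv.Perm (Fin N), ∫ w in {w | StrictMono w}, F (w ∘ σ) ∂(Measure.pi fun _ => μ) := by
  let chamber (σ : Equiv.Perm (Fin N)) : Set (Fin N → α) := {x | StrictMono (x ∘ σ)}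
  have measurableSet_chamber (σ) : MeasurableSet (chamber σ) :=
    measurableSet_setOf_strictMono_comp σ
  have sum_indicator_chamber :
      ∀ᵐ x ∂(Measure.pi fun _ => μ), F x = ∑ σ, (chamber σ).indicator F x := by
    filter_upwards [ae_injective_pi fun _ => μ] with x hx
    simp [chamber, Set.indicator_apply, strictMono_comp_iff_eq_sort hx]
  calc ∫ x, F x ∂(Measure.pi fun _ => μ)
    _ = ∑ σ, ∫ x, (chamber σ).indicator F x ∂(Measure.pi fun _ => μ) := by
      rw [integral_congr_ae sum_indicator_chamber,
        integral_finsetSum _ fun σ _ => hF.indicator (measurableSet_chamber σ)]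
    _ = ∑ σ, ∫ x in chamber σ, F x ∂(Measure.pi fun _ => μ) := by
      simp only [integral_indicator (measurableSet_chamber _)]
    _ = ∑ σ : Equiv.Perm (Fin N), ∫ x in chamber σ.symm, F x ∂(Measure.pi fun _ => μ) :=
      ((Equiv.symmEquiv (Fin N) (Fin N)).sum_comp
        fun σ => ∫ x in chamber σ, F x ∂(Measure.pi fun _ => μ)).symm
    _ = ∑ σ : Equiv.Perm (Fin N),
          ∫ w in {w | StrictMono w}, F (w ∘ σ) ∂(Measure.pi fun _ => μ) := by
      refine Finset.sum_congr rfl fun σ _ => ?_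
      rw [← setIntegral_comp_perm μ σ F]
      simp [chamber, Function.comp_assoc]

end Ordering

section Append

variable {α : Type*} [MeasurableSpace α] {n m : ℕ}

lemma measurePreserving_append (μ : Fin (n + m) → Measure α) [∀ i, SigmaFinite (μ i)] :
    MeasurePreserving (fun p : (Fin n → α) × (Fin m → α) => Fin.append p.1 p.2)
      ((Measure.pi fun i => μ (Fin.castAdd m i)).prod (Measure.pi fun j => μ (Fin.natAdd n j)))
      (Measure.pi μ) := by
  have hmeas : Measurable fun p : (Fin n → α) × (Fin m → α) => Fin.append p.1 p.2 := by
    refine measurable_pi_lambda _ (Fin.addCases (fun i => ?_) fun j => ?_)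
    · simp only [Fin.append_left]
      fun_prop
    · simp only [Fin.append_right]
      fun_prop
  refine ⟨hmeas, (Measure.pi_eq fun S hS => ?_).symm⟩
  have preimage_box : (fun p : (Fin n → α) × (Fin m → α) => Fin.append p.1 p.2) ⁻¹' Set.univ.pi S =
      (Set.univ.pi fun i => S (Fin.castAdd m i)) ×ˢ (Set.univ.pi fun j => S (Fin.natAdd n j)) := by
    ext p
    simp [Fin.forall_fin_add]
  rw [Measure.map_apply hmeas (.univ_pi hS), preimage_box, Measure.prod_prod, Measure.pi_pi,
    Measure.pi_pi, Fin.prod_univ_add]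

lemma integral_eq_integral_integral_append {E : Type*} [NormedAddCommGroup E] [NormedSpace ℝ E]
    {μ : Measure α} [SigmaFinite μ] {F : (Fin (n + m) → α) → E}
    (hF : Integrable F (Measure.pi fun _ => μ)) :
    ∫ x, F x ∂(Measure.pi fun _ => μ) =
      ∫ u : Fin m → α, ∫ v : Fin n → α, F (Fin.append v u)
        ∂(Measure.pi fun _ => μ) ∂(Measure.pi fun _ => μ) := by
  have hmp := measurePreserving_append (n := n) (m := m) fun _ => μ
  rw [← hmp.map_eq, integral_map hmp.aemeasurable (hmp.map_eq.symm ▸ hF.1)]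
  exact integral_prod_symm _ (hmp.integrable_comp_of_integrable hF)

end Append

section NestedSimplex

/-- The domain of the iterated integral, with `v` and `u` concatenated: the points `(v, u)` with
`u ∈ Λ^m_{s,t}` and `v ∈ Λ^n_{s,u_k}`. -/
def nestedSimplex (n : ℕ) {m : ℕ} (k : Fin m) (s t : ℝ) : Set (Fin (n + m) → ℝ) :=
  {x | (fun i => x (Fin.castAdd m i)) ∈ simplexSet n s (x (Fin.natAdd n k)) ∧
    (fun j => x (Fin.natAdd n j)) ∈ simplexSet m s t}

lemma append_mem_nestedSimplex_iff {n m : ℕ} {k : Fin m} {s t : ℝ} {v : Fin n → ℝ}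
    {u : Fin m → ℝ} :
    Fin.append v u ∈ nestedSimplex n k s t ↔ v ∈ simplexSet n s (u k) ∧ u ∈ simplexSet m s t := by
  simp only [nestedSimplex, Set.mem_ofPred_eq, Fin.append_left, Fin.append_right]

lemma nestedSimplex_subset_pi_Ioo (n : ℕ) {m : ℕ} (k : Fin m) (s t : ℝ) :
    nestedSimplex n k s t ⊆ Set.univ.pi fun _ => Set.Ioo s t := by
  rintro x ⟨hv, hu⟩
  rw [Set.mem_univ_pi, Fin.forall_fin_add]
  exact ⟨fun i => ⟨(hv.2 i).1, (hv.2 i).2.trans (hu.2 k).2⟩, hu.2⟩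

lemma comp_mem_nestedSimplex_iff {n m : ℕ} {k : Fin m} {s t : ℝ} {w : Fin (n + m) → ℝ}
    (hw : StrictMono w) (σ : Equiv.Perm (Fin (n + m))) :
    w ∘ σ ∈ nestedSimplex n k s t ↔ IsShuffleBelow k σ ∧ w ∈ simplexSet (n + m) s t := by
  rw [isShuffleBelow_iff]
  constructor
  · intro hwσ
    have forall_mem_Ioo (p) : w p ∈ Set.Ioo s t := by
      simpa using nestedSimplex_subset_pi_Ioo n k s t hwσ (σ.symm p) trivial
    obtain ⟨⟨hv, hvu⟩, hu, -⟩ := hwσ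
    exact ⟨⟨fun i j hij => hw.lt_iff_lt.1 (hv hij), fun i j hij => hw.lt_iff_lt.1 (hu hij),
      fun i => hw.lt_iff_lt.1 (hvu i).2⟩, hw, forall_mem_Ioo⟩
  · rintro ⟨⟨hv, hu, hvu⟩, -, hIoo⟩
    exact ⟨⟨hw.comp hv, fun i => ⟨(hIoo _).1, hw (hvu i)⟩⟩, hw.comp hu, fun j => hIoo _⟩

lemma measurableSet_simplexSet (m : ℕ) (s t : ℝ) : MeasurableSet (simplexSet m s t) := by
  have measurableSet_cube : MeasurableSet {u : Fin m → ℝ | ∀ i, u i ∈ Set.Ioo s t} := by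
    simp only [Set.mem_Ioo]
    measurability
  exact (measurableSet_setOf_strictMono_comp id).inter measurableSet_cube

lemma measurableSet_nestedSimplex (n : ℕ) {m : ℕ} (k : Fin m) (s t : ℝ) :
    MeasurableSet (nestedSimplex n k s t) := by
  have measurableSet_below : MeasurableSet {x : Fin (n + m) → ℝ |
      ∀ i, x (Fin.castAdd m i) ∈ Set.Ioo s (x (Fin.natAdd n k))} := by
    simp only [Set.mem_Ioo]
    measurability
  exact ((measurableSet_setOf_strictMono_comp _).inter measurableSet_below).inter
    (measurableSet_simplexSet m s t |>.preimage (by fun_prop))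

variable {n m : ℕ} {k : Fin m} {s t : ℝ} {μ : Measure ℝ} [SigmaFinite μ]
  {E : Type*} [NormedAddCommGroup E] [NormedSpace ℝ E] {F : (Fin (n + m) → ℝ) → E}

lemma setIntegral_setIntegral_append_eq_setIntegral_nestedSimplex
    (hF : IntegrableOn F (nestedSimplex n k s t) (Measure.pi fun _ => μ)) :
    ∫ u in simplexSet m s t, ∫ v in simplexSet n s (u k), F (Fin.append v u)
        ∂(Measure.pi fun _ => μ) ∂(Measure.pi fun _ => μ) =
      ∫ x in nestedSimplex n k s t, F x ∂(Measure.pi fun _ => μ) := by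
  classical
  have hN := measurableSet_nestedSimplex n k s t
  rw [← integral_indicator hN, integral_eq_integral_integral_append (hF.integrable_indicator hN),
    ← integral_indicator (measurableSet_simplexSet m s t)]
  congr! with u
  by_cases hu : u ∈ simplexSet m s t
  · simp [hu, ← integral_indicator (measurableSet_simplexSet n s (u k)), Set.indicator_apply,
      append_mem_nestedSimplex_iff]
  · simp [hu, append_mem_nestedSimplex_iff]

open Classical in
lemma setIntegral_nestedSimplex_eq_sum_shuffles [NullSingletonClass μ]
    (hF : IntegrableOn F (nestedSimplex n k s t) (Measure.pi fun _ => μ)) :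
    ∫ x in nestedSimplex n k s t, F x ∂(Measure.pi fun _ => μ) =
      ∑ σ : Equiv.Perm (Fin (n + m)), if IsShuffleBelow k σ then
        ∫ w in simplexSet (n + m) s t, F (w ∘ σ) ∂(Measure.pi fun _ => μ) else 0 := by
  have hN := measurableSet_nestedSimplex n k s t
  have hincr : MeasurableSet {w : Fin (n + m) → ℝ | StrictMono w} :=
    measurableSet_setOf_strictMono_comp id
  rw [← integral_indicator hN,
    integral_eq_sum_perm_setIntegral_strictMono (hF.integrable_indicator hN)]
  refine Finset.sum_congr rfl fun σ _ => ?_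
  have indicator_comp {w : Fin (n + m) → ℝ} (hw : StrictMono w) :
      (nestedSimplex n k s t).indicator F (w ∘ σ) =
        if IsShuffleBelow k σ then (simplexSet (n + m) s t).indicator (fun w => F (w ∘ σ)) w
        else 0 := by
    simp only [Set.indicator_apply, comp_mem_nestedSimplex_iff hw, ite_and]
  rw [setIntegral_congr_fun hincr fun w hw => indicator_comp hw]
  split_ifs
  · rw [setIntegral_indicator (measurableSet_simplexSet _ s t),
      Set.inter_eq_right.2 fun w hw => hw.1]
  · exact integral_zero _ _

end NestedSimplex

lemma integrableOn_prod_pi {ι 𝕜 : Type*} [Fintype ι] [RCLike 𝕜] {α : ι → Type*}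
    [∀ i, MeasurableSpace (α i)] {μ : ∀ i, Measure (α i)} [∀ i, SigmaFinite (μ i)]
    {S : ∀ i, Set (α i)} {h : ∀ i, α i → 𝕜} (hh : ∀ i, IntegrableOn (h i) (S i) (μ i)) :
    IntegrableOn (fun x => ∏ i, h i (x i)) (Set.univ.pi S) (Measure.pi μ) := by
  rw [IntegrableOn, Measure.restrict_pi_pi]
  exact Integrable.fintype_prod_dep hh

open Classical in
theorem integral_nested_simplex_eq_sum_shuffles_general {𝕜 : Type*} [RCLike 𝕜]
    (μ : Measure ℝ) [SigmaFinite μ] [NullSingletonClass μ] (s t : ℝ) {m n : ℕ} (k : Fin m)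
    {g : Fin n → ℝ → 𝕜} {f : Fin m → ℝ → 𝕜}
    (hg : ∀ j, IntegrableOn (g j) (Set.Ioo s t) μ) (hf : ∀ i, IntegrableOn (f i) (Set.Ioo s t) μ) :
    (∫ u in simplexSet m s t,
        (∫ v in simplexSet n s (u k), ∏ j, g j (v j) ∂(Measure.pi fun _ => μ)) * ∏ i, f i (u i)
          ∂(Measure.pi fun _ => μ)) =
      ∑ σ : Equiv.Perm (Fin (n + m)), if IsShuffleBelow k σ then
        ∫ w in simplexSet (n + m) s t, ∏ i, Fin.append g f i (w (σ i)) ∂(Measure.pi fun _ => μ)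
      else 0 := by
  have integrableOn_append (i) : IntegrableOn (Fin.append g f i) (Set.Ioo s t) μ := by
    revert i
    simpa [Fin.forall_fin_add] using ⟨hg, hf⟩
  have integrableOn_nestedSimplex :
      IntegrableOn (fun x => ∏ i, Fin.append g f i (x i)) (nestedSimplex n k s t)
        (Measure.pi fun _ => μ) :=
    (integrableOn_prod_pi integrableOn_append).mono_set (nestedSimplex_subset_pi_Ioo n k s t)
  calc
    _ = ∫ u in simplexSet m s t, ∫ v in simplexSet n s (u k),
          ∏ i, Fin.append g f i (Fin.append v u i)
          ∂(Measure.pi fun _ => μ) ∂(Measure.pi fun _ => μ) := by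
      simp only [Fin.prod_univ_add, Fin.append_left, Fin.append_right, integral_mul_const]
    _ = ∫ x in nestedSimplex n k s t, ∏ i, Fin.append g f i (x i) ∂(Measure.pi fun _ => μ) :=
      setIntegral_setIntegral_append_eq_setIntegral_nestedSimplex integrableOn_nestedSimplex
    _ = _ := setIntegral_nestedSimplex_eq_sum_shuffles integrableOn_nestedSimplex

lemma integrableOn_Ioo_of_abs_le {h : ℝ → ℝ} (hh : Measurable h) {C : ℝ} (hC : ∀ x, |h x| ≤ C)
    (s t : ℝ) : IntegrableOn h (Set.Ioo s t) :=
  Measure.integrableOn_of_bounded measure_Ioo_lt_top.ne hh.aestronglyMeasurable (.of_forall hC)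

open Classical in
/-- The nested-shuffle formula: for bounded Borel functions
`g₁, …, g_n` and `f₁, …, f_m` on `[0,T]`, and `k` among the `u`-variables,
`∫_{Λ^m_{s,t}} (∫_{Λ^n_{s,u_k}} Π_j g_j(v_j) dv) Π_i f_i(u_i) du
  = Σ_{σ ∈ S_k(m,n)} ∫_{Λ^{m+n}_{s,t}} Π_i h_i(w_{σ(i)}) dw`,
where `h = (g₁, …, g_n, f₁, …, f_m)` and `S_k(m,n)` consists of the permutations of
`{1, …, n+m}` increasing on the first `n` indices, increasing on the last `m` indices,
and fixing the positions of the `u`-variables from the `k`-th one on. -/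
theorem integral_nested_simplex_eq_sum_shuffles
    (T : ℝ) (hT : 0 < T) (s t : ℝ) (hs : 0 ≤ s) (hst : s < t) (htT : t ≤ T)
    (m n : ℕ) (hm : 1 ≤ m) (hn : 1 ≤ n) (k : Fin m)
    (g : Fin n → ℝ → ℝ) (f : Fin m → ℝ → ℝ)
    (hg : ∀ j, Measurable (g j)) (hf : ∀ i, Measurable (f i))
    (C : ℝ) (hgC : ∀ j, ∀ x, |g j x| ≤ C) (hfC : ∀ i, ∀ x, |f i x| ≤ C) :
    (∫ u in simplexSet m s t,
        (∫ v in simplexSet n s (u k), ∏ j, g j (v j)) * ∏ i, f i (u i)) =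
      ∑ σ : Equiv.Perm (Fin (n + m)),
        if (StrictMono fun i : Fin n => σ (Fin.castAdd m i)) ∧
            (StrictMono fun j : Fin m => σ (Fin.natAdd n j)) ∧
            (∀ j : Fin m, k ≤ j → σ (Fin.natAdd n j) = Fin.natAdd n j) then
          ∫ w in simplexSet (n + m) s t,
            ∏ i : Fin (n + m), Fin.append g f i (w (σ i))
        else 0 := by
  refine (integral_nested_simplex_eq_sum_shuffles_general volume s t k
    (fun j => integrableOn_Ioo_of_abs_le (hg j) (hgC j) s t)
    (fun i => integrableOn_Ioo_of_abs_le (hf i) (hfC i) s t)).trans ?_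
  -- the two sums differ only in their `Decidable` instances
  congr!
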